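/- Let A be a finite-dimensional left Leibniz algebra over a field F. If the centralizer Z_A(A^ω) is not contained in A^ω, then the center Z(A) ≠ {0}. -/

import Mathlib

open Submodule

section LeibnizDefs

variable {F : Type*} {A : Type*} [Field F] [AddCommGroup A] [Module F A]

/-- The span of all products `b*c` with `b ∈ B`, `c ∈ C`. -/
def mulSub (mul : A →ₗ[F] A →ₗ[F] A) (B C : Submodule F A) : Submodule F A :=
  Submodule.span F {z : A | ∃ b ∈ B, ∃ c ∈ C, mul b c = z}

/-- `fSub mul B C = B·C + C·B`, the function `f(B,C)`. -/
def fSub (mul : A →ₗ[F] A →ₗ[F] A) (B C : Submodule F A) : Submodule F A :=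
  mulSub mul B C ⊔ mulSub mul C B

/-- `fIter mul B C n = f^{n+1}(B,C)` (so index `0` is `f^1(B,C) = f(B,C)`). -/
def fIter (mul : A →ₗ[F] A →ₗ[F] A) (B C : Submodule F A) : ℕ → Submodule F A
  | 0 => fSub mul B C
  | n + 1 => fSub mul B (fIter mul B C n)

/-- `lcs mul B n = B^{n+1}`, the lower central series (index `0` is `B^1 = B`). -/
def lcs (mul : A →ₗ[F] A →ₗ[F] A) (B : Submodule F A) : ℕ → Submodule F A
  | 0 => B
  | n + 1 => mulSub mul B (lcs mul B n)

/-- `ds mul B n = B^{(n+1)}`, the derived series (index `0` is `B^{(1)} = B`). -/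
def ds (mul : A →ₗ[F] A →ₗ[F] A) (B : Submodule F A) : ℕ → Submodule F A
  | 0 => B
  | n + 1 => mulSub mul (ds mul B n) (ds mul B n)

/-- `B^ω = ⋂_{i ≥ 1} B^i`. -/
def omegaSub (mul : A →ₗ[F] A →ₗ[F] A) (B : Submodule F A) : Submodule F A :=
  ⨅ n, lcs mul B n

/-- `B` is a subalgebra: a subspace closed under multiplication. -/
def IsSubalg (mul : A →ₗ[F] A →ₗ[F] A) (B : Submodule F A) : Prop :=
  ∀ x ∈ B, ∀ y ∈ B, mul x y ∈ B

/-- `I` is an ideal of the subalgebra `S`: `I ⊆ S` and `xI + Ix ⊆ I` for all `x ∈ S`. -/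
def IsIdealIn (mul : A →ₗ[F] A →ₗ[F] A) (I S : Submodule F A) : Prop :=
  I ≤ S ∧ ∀ x ∈ S, ∀ y ∈ I, mul x y ∈ I ∧ mul y x ∈ I

/-- `B` is subinvariant in `S`: there is a chain of subalgebras
`B = c 0 ⊆ c 1 ⊆ ⋯ ⊆ c t = S` with each term an ideal of the next. -/
def IsSubinvariantIn (mul : A →ₗ[F] A →ₗ[F] A) (B S : Submodule F A) : Prop :=
  ∃ (t : ℕ) (c : ℕ → Submodule F A), c 0 = B ∧ c t = S ∧
    (∀ i ≤ t, IsSubalg mul (c i)) ∧ ∀ i < t, IsIdealIn mul (c i) (c (i + 1))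

/-- `B` is nilpotent: `B^m = 0` for some `m`. -/
def IsNilpotentSub (mul : A →ₗ[F] A →ₗ[F] A) (B : Submodule F A) : Prop :=
  ∃ m, lcs mul B m = ⊥

/-- `B` is solvable: `B^{(m)} = 0` for some `m`. -/
def IsSolvableSub (mul : A →ₗ[F] A →ₗ[F] A) (B : Submodule F A) : Prop :=
  ∃ m, ds mul B m = ⊥

/-- The centralizer `Z_A(B) = {x : xb = 0 = bx for all b ∈ B}`. -/
def centralizerSet (mul : A →ₗ[F] A →ₗ[F] A) (B : Submodule F A) : Set A :=
  {x : A | ∀ b ∈ B, mul x b = 0 ∧ mul b x = 0}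

/-- `R` is the radical (the maximal solvable ideal) of the subalgebra `S`. -/
def IsRadicalIn (mul : A →ₗ[F] A →ₗ[F] A) (S R : Submodule F A) : Prop :=
  IsIdealIn mul R S ∧ IsSolvableSub mul R ∧
    ∀ T, IsIdealIn mul T S → IsSolvableSub mul T → T ≤ R

/-- `N` is the nilradical (the maximal nilpotent ideal) of the subalgebra `S`. -/
def IsNilradicalIn (mul : A →ₗ[F] A →ₗ[F] A) (S N : Submodule F A) : Prop :=
  IsIdealIn mul N S ∧ IsNilpotentSub mul N ∧
    ∀ T, IsIdealIn mul T S → IsNilpotentSub mul T → T ≤ N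

/-- `H` is a Cartan subalgebra: a nilpotent self-normalizing subalgebra. -/
def IsCartan (mul : A →ₗ[F] A →ₗ[F] A) (H : Submodule F A) : Prop :=
  IsSubalg mul H ∧ IsNilpotentSub mul H ∧
    ∀ x : A, (∀ h ∈ H, mul x h ∈ H ∧ mul h x ∈ H) → x ∈ H

/-- The subalgebra generated by a set: the smallest subalgebra containing it. -/
def subalgGen (mul : A →ₗ[F] A →ₗ[F] A) (s : Set A) : Submodule F A :=
  sInf {S : Submodule F A | IsSubalg mul S ∧ s ⊆ (S : Set A)}

end LeibnizDefs

/-!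
The left multiplications `L_x` of `A` form a Lie algebra `L` of endomorphisms, and `A` is an
`L`-module whose lower central series is that of `A`, so that `A^ω` is a term `A^n` of it. The
centralizer `C` of `A^ω` is a submodule on which `L` acts through a nilpotent quotient, because
`x ↦ L_x` maps `A^n` onto the corresponding term of the lower central series of `L`, and `A^n`
annihilates `C`. As `C ⊈ A^ω`, the Fitting decomposition of `C` has a nonzero null component,
hence there is a nonzero `c ∈ C` with `Ac = 0`. For such a `c` the map `a ↦ ca` is a module
endomorphism of `A` which vanishes on `A^n`. If it is zero then `c` is central. Otherwise its
image is a nonzero nilpotent module, so `L` annihilates some `ca ≠ 0`, and `ca` is central because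
`L_{ca} = [L_c, L_a] = -L_{ac} = 0`.
-/

attribute [local instance] LieRing.ofAssociativeRing

open LieModule

section LieModules

variable {R L M M' : Type*} [CommRing R] [LieRing L] [LieAlgebra R L]
  [AddCommGroup M] [Module R M] [LieRingModule L M] [LieModule R L M]
  [AddCommGroup M'] [Module R M'] [LieRingModule L M'] [LieModule R L M']

theorem exists_mem_ne_zero_forall_lie_eq_zero_of_isNilpotent {N : LieSubmodule R L M}
    [LieModule.IsNilpotent L N] (hN : N ≠ ⊥) : ∃ m ∈ N, m ≠ 0 ∧ ∀ x : L, ⁅x, m⁆ = 0 := by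
  have : Nontrivial N := (LieSubmodule.nontrivial_iff_ne_bot R L M).mpr hN
  have := nontrivial_max_triv_of_isNilpotent R L N
  obtain ⟨⟨m, hm⟩, hm0⟩ := exists_ne (0 : maxTrivSubmodule R L N)
  refine ⟨m, m.2, fun h ↦ hm0 (Subtype.ext (Subtype.ext h)), fun x ↦ ?_⟩
  exact congrArg Subtype.val (hm x)

theorem isNilpotent_range_of_lowerCentralSeries_le_ker {f : M →ₗ⁅R,L⁆ M'} {k : ℕ}
    (hk : lowerCentralSeries R L M k ≤ f.ker) : LieModule.IsNilpotent L f.range := by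
  let g : M →ₗ⁅R,L⁆ f.range := f.codRestrict f.range fun m ↦ f.mem_range _ |>.mpr ⟨m, rfl⟩
  have hg : Function.Surjective g := by
    rintro ⟨_, m, rfl⟩
    exact ⟨m, rfl⟩
  refine (LieModule.isNilpotent_iff R L f.range).mpr ⟨k, ?_⟩
  rw [← map_lowerCentralSeries_eq k hg, eq_bot_iff, LieSubmodule.map_le_iff_le_comap]
  intro m hm
  exact Subtype.ext (hk hm)

theorem isNilpotent_range_toEnd_of_lowerCentralSeries_le_ker {k : ℕ}
    (hk : lowerCentralSeries R L L k ≤ LieModule.ker R L M) :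
    LieRing.IsNilpotent (toEnd R L M).range := by
  refine (LieModule.isNilpotent_iff R _ _).mpr ⟨k, ?_⟩
  rw [← LieIdeal.lowerCentralSeries_map_eq k (toEnd R L M).surjective_rangeRestrict,
    LieIdeal.map_eq_bot_iff]
  intro x hx
  exact Subtype.ext (hk hx)

theorem iInf_lowerCentralSeries_ne_top_of_not_le {N : LieSubmodule R L M}
    (hN : ¬ N ≤ ⨅ k, lowerCentralSeries R L M k) : ⨅ k, lowerCentralSeries R L N k ≠ ⊤ := by
  contrapose! hN
  refine le_iInf fun k ↦ ?_
  calc N = (⊤ : LieSubmodule R L N).map N.incl := N.map_incl_top.symm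
    _ = (lowerCentralSeries R L N k).map N.incl := by rw [iInf_eq_top.mp hN k]
    _ ≤ lowerCentralSeries R L M k := map_lowerCentralSeries_le k N.incl

variable [IsNoetherian R M] [IsArtinian R M]

theorem exists_ne_zero_forall_lie_eq_zero_of_isNilpotent [LieRing.IsNilpotent L]
    (hM : ⨅ k, lowerCentralSeries R L M k ≠ ⊤) : ∃ m : M, m ≠ 0 ∧ ∀ x : L, ⁅x, m⁆ = 0 := by
  have hne : genWeightSpace M (0 : L → R) ≠ ⊥ := by
    intro h0
    have hfitting := isCompl_genWeightSpace_zero_posFittingComp R L M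
    rw [h0] at hfitting
    rw [iInf_lowerCentralSeries_eq_posFittingComp] at hM
    exact hM (eq_top_of_bot_isCompl hfitting)
  obtain ⟨m, -, hm⟩ := exists_mem_ne_zero_forall_lie_eq_zero_of_isNilpotent hne
  exact ⟨m, hm⟩

theorem exists_ne_zero_forall_lie_eq_zero_of_lowerCentralSeries_le_ker {k : ℕ}
    (hk : lowerCentralSeries R L L k ≤ LieModule.ker R L M)
    (hM : ⨅ k, lowerCentralSeries R L M k ≠ ⊤) : ∃ m : M, m ≠ 0 ∧ ∀ x : L, ⁅x, m⁆ = 0 := by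
  have := isNilpotent_range_toEnd_of_lowerCentralSeries_le_ker hk
  have hrange : ⨅ k, lowerCentralSeries R (toEnd R L M).range M k ≠ ⊤ := by
    simpa only [ne_eq, ← LieSubmodule.toSubmodule_inj, LieSubmodule.iInf_toSubmodule,
      coe_lcs_range_toEnd_eq, LieSubmodule.top_toSubmodule] using hM
  obtain ⟨m, hm0, hm⟩ := exists_ne_zero_forall_lie_eq_zero_of_isNilpotent hrange
  exact ⟨m, hm0, fun x ↦ hm ⟨toEnd R L M x, x, rfl⟩⟩

end LieModules

section LeftMultiplications

variable {R A : Type*} [CommRing R] [AddCommGroup A] [Module R A] {mul : A →ₗ[R] A →ₗ[R] A}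

/-- The left Leibniz identity for a bilinear multiplication: left multiplications are
derivations. -/
def IsLeftLeibniz (mul : A →ₗ[R] A →ₗ[R] A) : Prop :=
  ∀ x y z : A, mul x (mul y z) = mul (mul x y) z + mul y (mul x z)

namespace IsLeftLeibniz

theorem lie_mul_mul (h : IsLeftLeibniz mul) (x y : A) : ⁅mul x, mul y⁆ = mul (mul x y) := by
  ext z
  rw [Ring.lie_def, LinearMap.sub_apply, Module.End.mul_apply, Module.End.mul_apply, h x y z,
    add_sub_cancel_right]

/-- The Lie algebra of left multiplications of a left Leibniz algebra, over which the algebra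
is a Lie module. -/
def leftMulLie (h : IsLeftLeibniz mul) : LieSubalgebra R (Module.End R A) where
  __ := LinearMap.range mul
  lie_mem' := by
    rintro _ _ ⟨x, rfl⟩ ⟨y, rfl⟩
    exact ⟨mul x y, (h.lie_mul_mul x y).symm⟩

/-- The map `x ↦ mul x`, as a homomorphism of Lie modules onto the adjoint module of the Lie
algebra of left multiplications. -/
def leftMulHom (h : IsLeftLeibniz mul) : A →ₗ⁅R, h.leftMulLie⁆ h.leftMulLie where
  __ := mul.rangeRestrict
  map_lie' := by
    rintro ⟨_, x, rfl⟩ y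
    exact Subtype.ext (h.lie_mul_mul x y).symm

theorem leftMulHom_surjective (h : IsLeftLeibniz mul) : Function.Surjective h.leftMulHom :=
  mul.surjective_rangeRestrict

theorem lowerCentralSeries_leftMulLie_le_ker (h : IsLeftLeibniz mul)
    {C : LieSubmodule R h.leftMulLie A} {n : ℕ}
    (hC : ∀ a ∈ lowerCentralSeries R h.leftMulLie A n, ∀ c ∈ C, mul a c = 0) :
    lowerCentralSeries R h.leftMulLie h.leftMulLie n ≤ LieModule.ker R h.leftMulLie C := by
  rw [← map_lowerCentralSeries_eq n h.leftMulHom_surjective]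
  rintro _ ⟨a, ha, rfl⟩
  rw [LieModule.mem_ker]
  exact fun c ↦ Subtype.ext (hC a ha c c.2)

theorem mul_mul_eq_zero (h : IsLeftLeibniz mul) {c : A} (hc : ∀ a, mul a c = 0) (a : A) :
    mul (mul c a) = 0 := by
  rw [← h.lie_mul_mul, ← lie_skew, h.lie_mul_mul, hc, map_zero, neg_zero]

/-- Left multiplication by an element `c` with `A c = 0`, as an endomorphism of the module `A`
over the Lie algebra of left multiplications. -/
def leftMulEndOfMulEqZero (h : IsLeftLeibniz mul) {c : A} (hc : ∀ a, mul a c = 0) :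
    A →ₗ⁅R, h.leftMulLie⁆ A where
  __ := mul c
  map_lie' := by
    rintro ⟨_, x, rfl⟩ a
    have hxca : mul x (mul c a) = mul c (mul x a) := by
      rw [h x c a, hc, map_zero, LinearMap.zero_apply, zero_add]
    exact hxca.symm

theorem exists_ne_zero_central_of_mul_eq_zero (h : IsLeftLeibniz mul) {c : A} (hc0 : c ≠ 0)
    (hc : ∀ a, mul a c = 0) {n : ℕ}
    (hn : ∀ a ∈ lowerCentralSeries R h.leftMulLie A n, mul c a = 0) :
    ∃ x : A, x ≠ 0 ∧ ∀ a : A, mul x a = 0 ∧ mul a x = 0 := by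
  let f := h.leftMulEndOfMulEqZero hc
  by_cases hf : f.range = ⊥
  · refine ⟨c, hc0, fun a ↦ ⟨?_, hc a⟩⟩
    exact (LieSubmodule.eq_bot_iff _).mp hf _ ((f.mem_range _).mpr ⟨a, rfl⟩)
  · have : LieModule.IsNilpotent h.leftMulLie f.range :=
      isNilpotent_range_of_lowerCentralSeries_le_ker fun a ha ↦ f.mem_ker.mpr (hn a ha)
    obtain ⟨_, ⟨a, rfl⟩, hca0, hca⟩ := exists_mem_ne_zero_forall_lie_eq_zero_of_isNilpotent hf
    exact ⟨mul c a, hca0, fun b ↦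
      ⟨by rw [h.mul_mul_eq_zero hc, LinearMap.zero_apply], hca ⟨mul b, b, rfl⟩⟩⟩

end IsLeftLeibniz

end LeftMultiplications

namespace IsLeftLeibniz

variable {F A : Type*} [Field F] [AddCommGroup A] [Module F A] {mul : A →ₗ[F] A →ₗ[F] A}

theorem toSubmodule_lowerCentralSeries (h : IsLeftLeibniz mul) (n : ℕ) :
    (lowerCentralSeries F h.leftMulLie A n : Submodule F A) = lcs mul ⊤ n := by
  induction n with
  | zero => rfl
  | succ n ih =>
    rw [lowerCentralSeries_succ, LieSubmodule.lieIdeal_oper_eq_linear_span', lcs, mulSub, ← ih]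
    congr 1
    ext z
    constructor
    · rintro ⟨⟨_, x, rfl⟩, -, a, ha, rfl⟩
      exact ⟨x, Submodule.mem_top, a, ha, rfl⟩
    · rintro ⟨x, -, a, ha, rfl⟩
      exact ⟨⟨mul x, x, rfl⟩, LieSubmodule.mem_top _, a, ha, rfl⟩

theorem toSubmodule_iInf_lowerCentralSeries (h : IsLeftLeibniz mul) :
    ((⨅ n, lowerCentralSeries F h.leftMulLie A n : LieSubmodule F h.leftMulLie A) :
      Submodule F A) = omegaSub mul ⊤ := by
  simp only [LieSubmodule.iInf_toSubmodule, h.toSubmodule_lowerCentralSeries, omegaSub]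

/-- The centralizer of a left ideal, as a Lie submodule: left ideals are encoded as submodules
over the Lie algebra of left multiplications. -/
def centralizer (h : IsLeftLeibniz mul) (N : LieSubmodule F h.leftMulLie A) :
    LieSubmodule F h.leftMulLie A where
  carrier := centralizerSet mul N
  zero_mem' b _ := by simp only [map_zero, LinearMap.zero_apply, and_self]
  add_mem' {x y} hx hy b hb := by
    simp only [map_add, LinearMap.add_apply, hx b hb, hy b hb, add_zero, and_self]
  smul_mem' r x hx b hb := by
    simp only [map_smul, LinearMap.smul_apply, hx b hb, smul_zero, and_self]
  lie_mem := by
    rintro ⟨_, x, rfl⟩ c hc b hb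
    have hxb : mul x b ∈ N := N.lie_mem (x := ⟨mul x, x, rfl⟩) hb
    have hleft := h x c b
    have hright := h x b c
    rw [(hc b hb).1, (hc _ hxb).1, map_zero, add_zero] at hleft
    rw [(hc b hb).2, (hc _ hxb).2, map_zero, zero_add] at hright
    exact ⟨hleft.symm, hright.symm⟩

end IsLeftLeibniz

/-- if `Z_A(A^ω)` is not contained in `A^ω`, then `Z(A) ≠ 0`. -/
theorem stmt_6 {F A : Type*} [Field F] [AddCommGroup A] [Module F A] [FiniteDimensional F A]
    (mul : A →ₗ[F] A →ₗ[F] A)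
    (hleib : ∀ x y z : A, mul x (mul y z) = mul (mul x y) z + mul y (mul x z))
    (h : ¬ centralizerSet mul (omegaSub mul (⊤ : Submodule F A)) ⊆
        (omegaSub mul (⊤ : Submodule F A) : Set A)) :
    ∃ x : A, x ≠ 0 ∧ ∀ a : A, mul x a = 0 ∧ mul a x = 0 := by
  have hL : IsLeftLeibniz mul := hleib
  let ω : LieSubmodule F hL.leftMulLie A := ⨅ k, lowerCentralSeries F hL.leftMulLie A k
  obtain ⟨n, hn : ω = lowerCentralSeries F hL.leftMulLie A n⟩ :=
    (eventually_iInf_lowerCentralSeries_eq F hL.leftMulLie A).exists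
  have hC : ¬ hL.centralizer ω ≤ ω := by
    rwa [← hL.toSubmodule_iInf_lowerCentralSeries] at h
  have hker := hL.lowerCentralSeries_leftMulLie_le_ker (C := hL.centralizer ω) (n := n)
    fun a ha c hc ↦ (hc a (hn.ge ha)).2
  obtain ⟨⟨c, hc⟩, hc0, hLc⟩ := exists_ne_zero_forall_lie_eq_zero_of_lowerCentralSeries_le_ker
    hker (iInf_lowerCentralSeries_ne_top_of_not_le hC)
  have hAc (a : A) : mul a c = 0 := congrArg Subtype.val (hLc ⟨mul a, a, rfl⟩)
  have hcn : ∀ a ∈ lowerCentralSeries F hL.leftMulLie A n, mul c a = 0 :=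
    fun a ha ↦ (hc a (hn.ge ha)).1
  exact hL.exists_ne_zero_central_of_mul_eq_zero (fun hc' ↦ hc0 (Subtype.ext hc')) hAc hcn
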